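/- arXiv:1305.1111 — 7 statements merged into one kernel-verified Lean document; each statement's English description precedes it below -/
import Mathlib

section
/- Let V be a finite-dimensional real vector space, ω an alternating bilinear form on V, and let J, I be complex structures on V such that ω(X, JX) > 0 and ω(X, IX) > 0 for every nonzero X ∈ V. Then the endomorphism id − I ∘ J is invertible and (J + I)⁻¹ ∘ (I − J) = (id − I ∘ J)⁻¹ ∘ (id + I ∘ J). -/
/-! Taming makes `J + I` injective, hence invertible in finite dimension. Since `I * I = -1`,
`1 - I * J = -I * (J + I)` and `1 + I * J = -I * (I - J)`; the unit `-I` cancels from the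
quotient. -/


/-- With `ω` an alternating bilinear form taming the complex structures `J` and
`I` on a finite-dimensional real vector space `V`, the endomorphism `1 - I ∘ J` is invertible
and `(J + I)⁻¹ ∘ (I - J) = (1 - I ∘ J)⁻¹ ∘ (1 + I ∘ J)`. -/
theorem stmt_1 {V : Type*} [AddCommGroup V] [Module ℝ V] [FiniteDimensional ℝ V]
    (ω : LinearMap.BilinForm ℝ V) (hω : ∀ X : V, ω X X = 0)
    (J I : Module.End ℝ V) (hJ : J * J = -1) (hI : I * I = -1)
    (htJ : ∀ X : V, X ≠ 0 → 0 < ω X (J X))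
    (htI : ∀ X : V, X ≠ 0 → 0 < ω X (I X)) :
    IsUnit (1 - I * J) ∧
      Ring.inverse (J + I) * (I - J) = Ring.inverse (1 - I * J) * (1 + I * J) := by
  -- taming makes `J + I` injective: `ω X ((J + I) X)` is a sum of two positive terms
  have hU : IsUnit (J + I) := by
    rw [LinearMap.isUnit_iff_ker_eq_bot, LinearMap.ker_eq_bot']
    intro X hX
    by_contra hne
    have h : ω X (J X) + ω X (I X) = 0 := by
      rw [← map_add, ← LinearMap.add_apply, hX, map_zero]
    linarith [htJ X hne, htI X hne]
  have hfac : 1 - I * J = -I * (J + I) := by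
    rw [mul_add, neg_mul, neg_mul, hI]; abel
  have hIU : IsUnit (-I) := IsUnit.of_mul_eq_one I (by rw [neg_mul, hI, neg_neg])
  have hU' : IsUnit (1 - I * J) := hfac ▸ hIU.mul hU
  refine ⟨hU', ?_⟩
  -- after left multiplication by `1 - I * J = -I * (J + I)`, what remains is
  -- `-I * (I - J) = 1 + I * J`
  refine hU'.mul_left_cancel ?_
  rw [Ring.mul_inverse_cancel_left _ _ hU', hfac, mul_assoc,
    Ring.mul_inverse_cancel_left _ _ hU, mul_sub, neg_mul, neg_mul, hI]
  abel
end

section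
/- Let V be a finite-dimensional real vector space and let J, I be complex structures on V such that J + I is invertible. Then the endomorphism K := (J + I)⁻¹ ∘ (I − J) anticommutes with J, i.e. K ∘ J = −J ∘ K. -/
/-- If `J, I` are complex structures on a finite-dimensional real vector space
`V` with `J + I` invertible, then `K := (J + I)⁻¹ ∘ (I - J)` anticommutes with `J`. -/
theorem stmt_2 {V : Type*} [AddCommGroup V] [Module ℝ V] [FiniteDimensional ℝ V]
    (J I : Module.End ℝ V) (hJ : J * J = -1) (hI : I * I = -1)
    (hu : IsUnit (J + I)) :
    (Ring.inverse (J + I) * (I - J)) * J = -(J * (Ring.inverse (J + I) * (I - J))) := by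
  -- `J + I` intertwines `J` with `I`, and `I - J` intertwines `J` with `-I`.
  have hS : (J + I) * J = I * (J + I) := by
    rw [add_mul, mul_add, hJ, hI, add_comm]
  have hD : (I - J) * J = -(I * (I - J)) := by
    rw [sub_mul, mul_sub, hJ, hI]; abel
  have hinv : Ring.inverse (J + I) * I = J * Ring.inverse (J + I) := by
    calc Ring.inverse (J + I) * I
        = Ring.inverse (J + I) * (I * (J + I)) * Ring.inverse (J + I) := by
          rw [mul_assoc, mul_assoc, Ring.mul_inverse_cancel _ hu, mul_one]
      _ = J * Ring.inverse (J + I) := by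
          rw [← hS, ← mul_assoc, Ring.inverse_mul_cancel _ hu, one_mul]
  rw [mul_assoc, hD, mul_neg, ← mul_assoc, hinv, mul_assoc]
end

section
/- Let (V, g) be a finite-dimensional real inner product space, J an orthogonal complex structure on V (g(JX, JY) = g(X, Y)), and ω the 2-form ω(X, Y) = g(JX, Y). Let I be a complex structure on V that is compatible with ω (ω(IX, IY) = ω(X, Y) for all X, Y) and tamed by ω (ω(X, IX) > 0 for all nonzero X). Then K := (J + I)⁻¹ ∘ (I − J) is g-symmetric: g(KX, Y) = g(X, KY) for all X, Y ∈ V. -/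
/-!
Put `P := J ∘ I`. Compatibility with `ω` says exactly that `P` is `g`-symmetric, and tameness
gives `g(JX, (J + I)X) = ‖X‖² + ω(X, IX) > 0` for `X ≠ 0`, so `J + I` is invertible.
Composing with `J` turns `(J + I)K = I - J` into `(P - 1)K = P + 1`, that is, `K` is the Cayley
transform `(P - 1)⁻¹(P + 1) = 1 + 2(P - 1)⁻¹` of a symmetric map, hence symmetric.
-/

open RealInnerProductSpace

/-- Tameness makes `J + I` injective, hence a unit in finite dimension; thus `Ring.inverse (J + I)`
is the actual inverse. -/
lemma isUnit_add_of_tamed {V : Type*} [NormedAddCommGroup V] [InnerProductSpace ℝ V]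
    [FiniteDimensional ℝ V] (J I : Module.End ℝ V)
    (hJo : ∀ X Y : V, ⟪J X, J Y⟫ = ⟪X, Y⟫)
    (hIt : ∀ X : V, X ≠ 0 → 0 < ⟪J X, I X⟫) : IsUnit (J + I) := by
  rw [LinearMap.isUnit_iff_ker_eq_bot, LinearMap.ker_eq_bot']
  intro X hX
  by_contra hne
  have h : ⟪J X, (J + I) X⟫ = 0 := by rw [hX, inner_zero_right]
  rw [LinearMap.add_apply, inner_add_right, hJo] at h
  linarith [hIt X hne, real_inner_self_nonneg (x := X)]

/-- Compatibility of `I` with `ω` amounts to `g`-symmetry of `J ∘ I`. -/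
lemma inner_comp_symm_of_compatible {V : Type*} [NormedAddCommGroup V] [InnerProductSpace ℝ V]
    (J I : Module.End ℝ V) (hJ : J * J = -1) (hI : I * I = -1)
    (hJo : ∀ X Y : V, ⟪J X, J Y⟫ = ⟪X, Y⟫)
    (hIc : ∀ X Y : V, ⟪J (I X), I Y⟫ = ⟪J X, Y⟫) (X Y : V) :
    ⟪J (I X), Y⟫ = ⟪X, J (I Y)⟫ := by
  have hII : I (I Y) = -Y := by simpa using LinearMap.congr_fun hI Y
  have hJJ : J (J (I Y)) = -I Y := by simpa using LinearMap.congr_fun hJ (I Y)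
  have h1 := hIc X (I Y)
  have h2 := hJo X (J (I Y))
  rw [hII, inner_neg_right] at h1
  rw [hJJ, inner_neg_right] at h2
  linarith

/-- Let `(V, g)` be a finite-dimensional real inner product space, `J` a
`g`-orthogonal complex structure, `ω(X, Y) = g(JX, Y)`, and `I` a complex structure
compatible with `ω` and tamed by `ω`. Then `K := (J + I)⁻¹ ∘ (I - J)` is `g`-symmetric. -/
theorem stmt_3 {V : Type*} [NormedAddCommGroup V] [InnerProductSpace ℝ V]
    [FiniteDimensional ℝ V]
    (J I : Module.End ℝ V) (hJ : J * J = -1) (hI : I * I = -1)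
    (hJo : ∀ X Y : V, ⟪J X, J Y⟫ = ⟪X, Y⟫)
    (hIc : ∀ X Y : V, ⟪J (I X), I Y⟫ = ⟪J X, Y⟫)
    (hIt : ∀ X : V, X ≠ 0 → 0 < ⟪J X, I X⟫) :
    ∀ X Y : V, ⟪(Ring.inverse (J + I) * (I - J)) X, Y⟫
      = ⟪X, (Ring.inverse (J + I) * (I - J)) Y⟫ := by
  intro X Y
  set K := Ring.inverse (J + I) * (I - J) with hK
  have hAK : (J + I) * K = I - J := by
    rw [hK, ← mul_assoc, Ring.mul_inverse_cancel _ (isUnit_add_of_tamed J I hJo hIt), one_mul]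
  have hJJ : ∀ Z, J (J Z) = -Z := fun Z => by simpa using LinearMap.congr_fun hJ Z
  -- `(P - 1)K = P + 1` with `P = J ∘ I`
  have key : ∀ Z, J (I (K Z)) = K Z + J (I Z) + Z := by
    intro Z
    have h : J (K Z) + I (K Z) = I Z - J Z := by simpa using LinearMap.congr_fun hAK Z
    have hmul := congrArg J h
    rw [map_add, map_sub, hJJ, hJJ] at hmul
    rw [eq_add_of_neg_add_eq hmul]
    abel
  -- Symmetry of `P` on `(K - 1)X` and `(K - 1)Y`, where `(P - 1)(K - 1) = 2`.
  have hP := inner_comp_symm_of_compatible J I hJ hI hJo hIc (K X - X) (K Y - Y)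
  have e : ∀ Z, J (I (K Z - Z)) = (K Z - Z) + (2 : ℝ) • Z := by
    intro Z
    rw [map_sub, map_sub, key]
    module
  rw [e, e, inner_add_left, inner_add_right, real_inner_smul_left, real_inner_smul_right,
    inner_sub_right X, inner_sub_left _ _ Y] at hP
  linarith
end

section
/- Let (V, g) be a finite-dimensional real inner product space, J an orthogonal complex structure on V, and ω the 2-form ω(X, Y) = g(JX, Y). Let I be a complex structure on V that is compatible with ω and tamed by ω, and set K := (J + I)⁻¹ ∘ (I − J). Then id − K² is positive definite with respect to g: g((id − K²)X, X) > 0 for every nonzero X ∈ V. -/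
/-!
Put `P := -(J * I)`. Since `J` is orthogonal, `⟪P X, Y⟫ = ⟪I X, J Y⟫`; compatibility of `I` with `ω`
makes `P` symmetric and tameness makes it positive definite. As `I = J P`, we have
`K = (1 + P)⁻¹ (P - 1)`, the Cayley transform of `P`. It sends `(1 + P) Z` to `(P - 1) Z` and is
symmetric, so for `X = (1 + P) Z`
`⟪(1 - K²) X, X⟫ = ‖(1 + P) Z‖² - ‖(P - 1) Z‖² = 4 ⟪P Z, Z⟫ > 0`.
-/

open RealInnerProductSpace

/-- With `K` the Cayley transform of the symmetric positive definite
endomorphism `P`, encoded by `K (1 + P) = P - 1`, the endomorphism `1 - K²` is positive definite. -/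
lemma one_sub_sq_pos_of_cayley {V : Type*} [NormedAddCommGroup V] [InnerProductSpace ℝ V]
    (P K : Module.End ℝ V) (hsymm : ∀ X Y : V, ⟪P X, Y⟫ = ⟪X, P Y⟫)
    (hpos : ∀ X : V, X ≠ 0 → 0 < ⟪P X, X⟫)
    (hsurj : Function.Surjective (1 + P : Module.End ℝ V)) (hK : K * (1 + P) = P - 1)
    (X : V) (hX : X ≠ 0) : 0 < ⟪(1 - K * K : Module.End ℝ V) X, X⟫ := by
  have hKapp (Z : V) : K (Z + P Z) = P Z - Z := by
    simpa using LinearMap.congr_fun hK Z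
  have hKsymm (X Y : V) : ⟪K X, Y⟫ = ⟪X, K Y⟫ := by
    obtain ⟨Z, rfl⟩ := hsurj X
    obtain ⟨W, rfl⟩ := hsurj Y
    simp only [LinearMap.add_apply, Module.End.one_apply, hKapp, inner_sub_left, inner_add_left,
      inner_sub_right, inner_add_right]
    linarith [hsymm Z W]
  obtain ⟨Z, rfl⟩ := hsurj X
  have hZ : Z ≠ 0 := by
    rintro rfl
    simp at hX
  have h := hpos Z hZ
  rw [LinearMap.sub_apply, Module.End.mul_apply, inner_sub_left, hKsymm]
  simp only [LinearMap.add_apply, Module.End.one_apply, hKapp, inner_sub_left, inner_add_left,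
    inner_sub_right, inner_add_right]
  linarith [hsymm Z Z]

/-- With `J` a `g`-orthogonal complex structure, `ω(X, Y) = g(JX, Y)`, and `I`
a complex structure compatible with `ω` and tamed by `ω`, the endomorphism
`1 - K²`, where `K := (J + I)⁻¹ ∘ (I - J)`, is positive definite with respect to `g`. -/
theorem stmt_4 {V : Type*} [NormedAddCommGroup V] [InnerProductSpace ℝ V]
    [FiniteDimensional ℝ V]
    (J I : Module.End ℝ V) (hJ : J * J = -1) (hI : I * I = -1)
    (hJo : ∀ X Y : V, ⟪J X, J Y⟫ = ⟪X, Y⟫)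
    (hIc : ∀ X Y : V, ⟪J (I X), I Y⟫ = ⟪J X, Y⟫)
    (hIt : ∀ X : V, X ≠ 0 → 0 < ⟪J X, I X⟫) :
    ∀ X : V, X ≠ 0 →
      0 < ⟪((1 - (Ring.inverse (J + I) * (I - J)) * (Ring.inverse (J + I) * (I - J))) :
        Module.End ℝ V) X, X⟫ := by
  have hJJ (X : V) : J (J X) = -X := by simpa using LinearMap.congr_fun hJ X
  have hII (X : V) : I (I X) = -X := by simpa using LinearMap.congr_fun hI X
  have hP (X Y : V) : ⟪(-(J * I)) X, Y⟫ = ⟪I X, J Y⟫ := by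
    rw [← hJo]
    simp [hJJ]
  have hsymm (X Y : V) : ⟪I X, J Y⟫ = ⟪J X, I Y⟫ := by
    have h1 := hIc (I X) Y
    have h2 := hJo (J (I X)) Y
    simp only [hII, hJJ, map_neg, inner_neg_left] at h1 h2
    linarith
  have hunit : IsUnit (J + I) := by
    rw [LinearMap.isUnit_iff_ker_eq_bot, LinearMap.ker_eq_bot']
    intro X hX
    by_contra hne
    have h := hIt X hne
    rw [eq_neg_of_add_eq_zero_right (show J X + I X = 0 from hX), inner_neg_right] at h
    linarith [real_inner_self_nonneg (x := J X)]
  have hJunit : IsUnit (-J) :=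
    IsUnit.of_mul_eq_one J (by rw [neg_mul, hJ, neg_neg])
  have hfac : 1 + -(J * I) = -J * (J + I) := by
    rw [neg_mul, mul_add, hJ]
    abel
  have hcomm : (I - J) * (1 + -(J * I)) = (J + I) * (-(J * I) - 1) := by
    have h : J * (J * I) = -I := by rw [← mul_assoc, hJ, neg_one_mul]
    simp only [mul_add, add_mul, mul_sub, sub_mul, mul_neg, mul_one, h]
    abel
  apply one_sub_sq_pos_of_cayley (-(J * I))
  · intro X Y
    rw [hP, hsymm, real_inner_comm, real_inner_comm _ X, hP]
  · intro X hX
    rw [hP, hsymm]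
    exact hIt X hX
  · rw [hfac]
    exact ((Module.End.isUnit_iff _).1 (hJunit.mul hunit)).2
  · rw [mul_assoc, hcomm, Ring.inverse_mul_cancel_left _ _ hunit]
end

section
/- Let (V, g) be a finite-dimensional real inner product space, J an orthogonal complex structure on V, and ω the 2-form ω(X, Y) = g(JX, Y). Let I be a complex structure on V that is compatible with ω and tamed by ω, and set K := (J + I)⁻¹ ∘ (I − J). Then ω(KX, Y) = −ω(X, KY) for all X, Y ∈ V. -/
/-!
Taming makes `J + I` injective: if `I X = -J X` then `ω(X, I X) = -‖J X‖² ≤ 0`. Hence `J + I` is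
invertible, and every vector has the form `(J + I) x`. Since `J² = I² = -1`, the maps `J + I` and
`I - J` anticommute, so `K ((J + I) x) = -(I - J) x`. Substituting `X = (J + I) x`, `Y = (J + I) y`
therefore removes the inverse from the claim, which becomes
`-ω((I - J) x, (J + I) y) = ω((J + I) x, (I - J) y)`. Expanding, both sides equal
`ω(J x, I y) - ω(I x, J y)` because `I` and `J` both preserve `ω`.
-/

open RealInnerProductSpace

/-- With `J` a `g`-orthogonal complex structure, `ω(X, Y) = g(JX, Y)`, and `I`
a complex structure compatible with `ω` and tamed by `ω`, the endomorphism
`K := (J + I)⁻¹ ∘ (I - J)` satisfies `ω(KX, Y) = -ω(X, KY)` for all `X, Y`. -/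
theorem stmt_5 {V : Type*} [NormedAddCommGroup V] [InnerProductSpace ℝ V]
    [FiniteDimensional ℝ V]
    (J I : Module.End ℝ V) (hJ : J * J = -1) (hI : I * I = -1)
    (hJo : ∀ X Y : V, ⟪J X, J Y⟫ = ⟪X, Y⟫)
    (hIc : ∀ X Y : V, ⟪J (I X), I Y⟫ = ⟪J X, Y⟫)
    (hIt : ∀ X : V, X ≠ 0 → 0 < ⟪J X, I X⟫) :
    ∀ X Y : V, ⟪J ((Ring.inverse (J + I) * (I - J)) X), Y⟫
      = -⟪J X, (Ring.inverse (J + I) * (I - J)) Y⟫ := by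
  have hker : LinearMap.ker (J + I) = ⊥ := by
    rw [LinearMap.ker_eq_bot']
    intro X hX
    by_contra hne
    have h := hIt X hne
    rw [LinearMap.add_apply, add_comm] at hX
    rw [eq_neg_of_add_eq_zero_left hX, inner_neg_right] at h
    linarith [real_inner_self_nonneg (x := J X)]
  have hunit : IsUnit (J + I) := (LinearMap.isUnit_iff_ker_eq_bot _).2 hker
  have hK : Ring.inverse (J + I) * (I - J) * (J + I) = -(I - J) := by
    have hanti : (I - J) * (J + I) = -((J + I) * (I - J)) := by
      simp only [sub_mul, mul_add, add_mul, mul_sub, hJ, hI]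
      abel
    rw [mul_assoc, hanti, mul_neg, ← mul_assoc, Ring.inverse_mul_cancel _ hunit, one_mul]
  have hKx (x : V) : (Ring.inverse (J + I) * (I - J)) ((J + I) x) = -(I - J) x :=
    LinearMap.congr_fun hK x
  have hsurj : Function.Surjective (J + I) :=
    LinearMap.range_eq_top.1 ((LinearMap.isUnit_iff_range_eq_top _).1 hunit)
  intro X Y
  obtain ⟨x, rfl⟩ := hsurj X
  obtain ⟨y, rfl⟩ := hsurj Y
  rw [hKx, hKx]
  simp only [LinearMap.add_apply, LinearMap.sub_apply, LinearMap.neg_apply, map_neg, map_add,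
    map_sub, inner_add_left, inner_add_right, inner_sub_left, inner_sub_right, inner_neg_left,
    inner_neg_right]
  linarith [hIc x y, hJo (J x) y]
end

section
/- Let (V, g) be a finite-dimensional real inner product space, J an orthogonal complex structure on V, and ω the 2-form ω(X, Y) = g(JX, Y). Let K be a linear endomorphism of V such that (1) K ∘ J = −J ∘ K, (2) g(KX, Y) = g(X, KY) for all X, Y, and (3) g((id − K²)X, X) > 0 for every nonzero X. Then id − K is invertible, and the endomorphism I := (id − K) ∘ J ∘ (id − K)⁻¹ is a complex structure on V (I² = −id) that is compatible with ω (ω(IX, IY) = ω(X, Y) for all X, Y) and tamed by ω (ω(X, IX) > 0 for every nonzero X). -/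
/-!
If `K X = X` then `(1 - K²) X = 0`, so positivity of `1 - K²` makes `1 - K` injective, hence
invertible in finite dimension. Every vector is therefore `(1 - K) A` for some `A`, and
`I (1 - K) A = (1 - K) J A`. Since `J` anticommutes with `K`, `J (1 - K) = (1 + K) J`, so by
symmetry of `K`, `ω((1 - K) A, I (1 - K) A) = g((1 + K) J A, (1 - K) J A) = g((1 - K²) J A, J A)`,
which gives taming. Compatibility follows in the same way from
`ω((1 - K) A, (1 - K) B) = g((1 - K²) J A, B)` and the fact that `J` is skew and commutes
with `K²`.
-/

open RealInnerProductSpace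

/-- With `J` a `g`-orthogonal complex structure and `ω(X, Y) = g(JX, Y)`, if an
endomorphism `K` anticommutes with `J`, is `g`-symmetric, and `1 - K²` is `g`-positive
definite, then `1 - K` is invertible and `I := (1 - K) ∘ J ∘ (1 - K)⁻¹` is a complex
structure compatible with `ω` and tamed by `ω`. -/
theorem stmt_6 {V : Type*} [NormedAddCommGroup V] [InnerProductSpace ℝ V]
    [FiniteDimensional ℝ V]
    (J : Module.End ℝ V) (hJ : J * J = -1)
    (hJo : ∀ X Y : V, ⟪J X, J Y⟫ = ⟪X, Y⟫)
    (K : Module.End ℝ V)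
    (h1 : K * J = -(J * K))
    (h2 : ∀ X Y : V, ⟪K X, Y⟫ = ⟪X, K Y⟫)
    (h3 : ∀ X : V, X ≠ 0 → 0 < ⟪((1 - K * K : Module.End ℝ V)) X, X⟫) :
    IsUnit (1 - K) ∧
      ((1 - K) * J * Ring.inverse (1 - K)) * ((1 - K) * J * Ring.inverse (1 - K)) = -1 ∧
      (∀ X Y : V, ⟪J (((1 - K) * J * Ring.inverse (1 - K)) X),
          ((1 - K) * J * Ring.inverse (1 - K)) Y⟫ = ⟪J X, Y⟫) ∧
      (∀ X : V, X ≠ 0 → 0 < ⟪J X, ((1 - K) * J * Ring.inverse (1 - K)) X⟫) := by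
  have hJJ : ∀ X, J (J X) = -X := fun X => by simpa using LinearMap.congr_fun hJ X
  have hKJ : ∀ X, K (J X) = -J (K X) := fun X => by simpa using LinearMap.congr_fun h1 X
  have hskew : ∀ X Y : V, ⟪J X, Y⟫ = -⟪X, J Y⟫ := fun X Y => by
    have h := hJo X (J Y)
    rw [hJJ, inner_neg_right] at h
    linarith
  have hinj : Function.Injective (1 - K : Module.End ℝ V) := by
    rw [injective_iff_map_eq_zero]
    intro X hX
    by_contra hne
    have hK : K X = X := by
      exact (sub_eq_zero.1 hX).symm
    have h := h3 X hne
    simp [hK] at h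
  have hU : IsUnit (1 - K) := (LinearMap.isUnit_iff_ker_eq_bot _).2 (LinearMap.ker_eq_bot.2 hinj)
  have hsurj : Function.Surjective (1 - K : Module.End ℝ V) :=
    LinearMap.surjective_of_injective hinj
  set I : Module.End ℝ V := (1 - K) * J * Ring.inverse (1 - K) with hI
  have hIK : I * (1 - K) = (1 - K) * J := by
    rw [hI, mul_assoc, Ring.inverse_mul_cancel _ hU, mul_one]
  have hIA : ∀ A, I ((1 - K) A) = (1 - K) (J A) := fun A => LinearMap.congr_fun hIK A
  refine ⟨hU, ?_, ?_, ?_⟩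
  · ext X
    obtain ⟨A, rfl⟩ := hsurj X
    rw [Module.End.mul_apply, hIA, hIA, hJJ, map_neg, LinearMap.neg_apply, Module.End.one_apply]
  · intro X Y
    obtain ⟨A, rfl⟩ := hsurj X
    obtain ⟨B, rfl⟩ := hsurj Y
    rw [hIA, hIA]
    have e1 : ⟪J (K A), K B⟫ = -⟪K A, J (K B)⟫ := hskew _ _
    have e2 : ⟪J A, K B⟫ = -⟪J (K A), B⟫ := by rw [← h2, hKJ, inner_neg_left]
    have e3 : ⟪A, J (K B)⟫ = -⟪K A, J B⟫ := by rw [h2, hKJ, inner_neg_right, neg_neg]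
    have e4 := hskew A B
    simp only [LinearMap.sub_apply, Module.End.one_apply, map_sub, hKJ, hJJ, map_neg,
      inner_sub_left, inner_sub_right, inner_neg_left, inner_neg_right]
    linarith
  · intro X hX
    obtain ⟨A, rfl⟩ := hsurj X
    rw [hIA]
    have hJA : J A ≠ 0 := fun h => by
      have hA := hJJ A
      rw [h, map_zero, eq_comm, neg_eq_zero] at hA
      exact hX (by rw [hA, map_zero])
    have h := h3 (J A) hJA
    have hl : J ((1 - K) A) = J A + K (J A) := by
      simp [hKJ, sub_eq_add_neg]
    have e := h2 (J A) (J A)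
    have e' := h2 (K (J A)) (J A)
    rw [hl]
    simp only [LinearMap.sub_apply, Module.End.one_apply, Module.End.mul_apply,
      inner_sub_left, inner_sub_right, inner_add_left] at h ⊢
    linarith
end

section
/- Let (V, g) be a 6-dimensional real inner product space, J an orthogonal complex structure on V, and ω the 2-form ω(X, Y) = g(JX, Y). Let φ be a nonzero alternating 3-form on V of type (3,0)+(0,3) with respect to J, i.e. φ(JX, JY, Z) = −φ(X, Y, Z) for all X, Y, Z ∈ V. Then for every complex structure I on V that is compatible with ω (ω(IX, IY) = ω(X, Y)) and tamed by ω (ω(X, IX) > 0 for all nonzero X), the (3,0)+(0,3)-part of φ with respect to I is nonzero; explicitly, there exist X, Y, Z ∈ V with φ(X, Y, Z) − φ(IX, IY, Z) − φ(IX, Y, IZ) − φ(X, IY, IZ) ≠ 0. -/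
open RealInnerProductSpace

/-!
Put `A = -J I`, so that `I = J A`. Compatibility of `I` with `ω` makes `A` self-adjoint for the
inner product and tameness makes it positive definite, hence `V` has an orthonormal basis `b`
with `A (b i) = μ i • b i` and `μ i > 0`. Then `I (b i) = μ i • J (b i)`, and since `φ` has type
`(3,0)+(0,3)` for `J`, evaluating the `I`-projection of `φ` on basis vectors gives
`(1 + μ i * μ j + μ i * μ k + μ j * μ k) * φ(b i, b j, b k)` up to the factor `1/4`. The first
factor is positive, and some value of `φ` on the basis is nonzero because `φ ≠ 0`.
-/

/-- The type condition, which is imposed on the first two slots, carries over to the other two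
pairs of slots because `φ` is alternating. -/
lemma type_other_slots {V : Type*} [AddCommGroup V] [Module ℝ V]
    (J : Module.End ℝ V) (φ : V [⋀^Fin 3]→ₗ[ℝ] ℝ)
    (h : ∀ X Y Z : V, φ ![J X, J Y, Z] = -φ ![X, Y, Z]) (X Y Z : V) :
    φ ![J X, Y, J Z] = -φ ![X, Y, Z] ∧ φ ![X, J Y, J Z] = -φ ![X, Y, Z] := by
  have s12 : ∀ a b c : V, φ ![a, c, b] = -φ ![a, b, c] := fun a b c => by
    rw [← φ.map_swap ![a, b, c] (show (1 : Fin 3) ≠ 2 by decide)]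
    congr 1; ext i; fin_cases i <;> rfl
  have s02 : ∀ a b c : V, φ ![c, b, a] = -φ ![a, b, c] := fun a b c => by
    rw [← φ.map_swap ![a, b, c] (show (0 : Fin 3) ≠ 2 by decide)]
    congr 1; ext i; fin_cases i <;> rfl
  constructor
  · rw [s12, h, s12 X Y Z, neg_neg]
  · rw [s02, h, s02 X Y Z, neg_neg]

lemma map_smul_three {V : Type*} [AddCommGroup V] [Module ℝ V]
    (φ : V [⋀^Fin 3]→ₗ[ℝ] ℝ) (x y z : ℝ) (a b c : V) :
    φ ![x • a, y • b, z • c] = x * y * z * φ ![a, b, c] := by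
  have := φ.map_smul_univ ![x, y, z] ![a, b, c]
  simp only [Fin.prod_univ_three, smul_eq_mul] at this
  rw [← show _ = x * y * z * φ ![a, b, c] from this]
  congr 1; ext i; fin_cases i <;> rfl

/-- Let `(V, g)` be a 6-dimensional real inner product space, `J` a
`g`-orthogonal complex structure, `ω(X, Y) = g(JX, Y)`, and `φ` a nonzero alternating
3-form of type `(3,0)+(0,3)` with respect to `J` (i.e. `φ(JX, JY, Z) = -φ(X, Y, Z)`).
Then for every complex structure `I` compatible with `ω` and tamed by `ω`, the
`(3,0)+(0,3)`-part of `φ` with respect to `I` is nonzero: there are `X, Y, Z` with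
`φ(X,Y,Z) - φ(IX,IY,Z) - φ(IX,Y,IZ) - φ(X,IY,IZ) ≠ 0`. -/
theorem stmt_12 {V : Type*} [NormedAddCommGroup V] [InnerProductSpace ℝ V]
    [FiniteDimensional ℝ V] (hdim : Module.finrank ℝ V = 6)
    (J : Module.End ℝ V) (hJ : J * J = -1)
    (hJo : ∀ X Y : V, ⟪J X, J Y⟫ = ⟪X, Y⟫)
    (φ : V [⋀^Fin 3]→ₗ[ℝ] ℝ) (hφ : φ ≠ 0)
    (hφtype : ∀ X Y Z : V, φ ![J X, J Y, Z] = -φ ![X, Y, Z]) :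
    ∀ I : Module.End ℝ V, I * I = -1 →
      (∀ X Y : V, ⟪J (I X), I Y⟫ = ⟪J X, Y⟫) →
      (∀ X : V, X ≠ 0 → 0 < ⟪J X, I X⟫) →
      ∃ X Y Z : V,
        φ ![X, Y, Z] - φ ![I X, I Y, Z] - φ ![I X, Y, I Z] - φ ![X, I Y, I Z] ≠ 0 := by
  intro I hI hcomp htame
  have hJ2 : ∀ X, J (J X) = -X := fun X => by simpa using LinearMap.congr_fun hJ X
  have hI2 : ∀ X, I (I X) = -X := fun X => by simpa using LinearMap.congr_fun hI X
  have hskew : ∀ X Y : V, ⟪X, J Y⟫ = -⟪J X, Y⟫ := fun X Y => by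
    rw [← hJo X (J Y), hJ2, inner_neg_right]
  have hA : (-(J * I) : Module.End ℝ V).IsSymmetric := fun X Y => by
    have := hcomp X (I Y)
    rw [hI2, inner_neg_right] at this
    simpa [hskew] using this
  set b := hA.eigenvectorBasis rfl with hb
  set μ := hA.eigenvalues rfl with hμ
  have hAb : ∀ i, -(J (I (b i))) = μ i • b i := fun i => by
    simpa using hA.apply_eigenvectorBasis rfl i
  have hIb : ∀ i, I (b i) = μ i • J (b i) := fun i => by
    rw [← map_smul, ← hAb, map_neg, hJ2, neg_neg]
  have hμpos : ∀ i, 0 < μ i := fun i => by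
    have := htame (b i) (b.orthonormal.ne_zero i)
    rw [hIb, inner_smul_right, hJo, real_inner_self_eq_norm_sq, b.orthonormal.1 i] at this
    simpa using this
  obtain ⟨v, hv⟩ : ∃ v : Fin 3 → Fin (Module.finrank ℝ V), φ (fun i => b (v i)) ≠ 0 := by
    by_contra! hall
    exact hφ (b.toBasis.ext_alternating fun v _ => by simpa using hall v)
  have hv' : φ ![b (v 0), b (v 1), b (v 2)] ≠ 0 := by
    convert hv using 2
    ext i; fin_cases i <;> rfl
  refine ⟨b (v 0), b (v 1), b (v 2), ?_⟩
  have h12 := map_smul_three φ (μ (v 0)) (μ (v 1)) 1 (J (b (v 0))) (J (b (v 1))) (b (v 2))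
  have h13 := map_smul_three φ (μ (v 0)) 1 (μ (v 2)) (J (b (v 0))) (b (v 1)) (J (b (v 2)))
  have h23 := map_smul_three φ 1 (μ (v 1)) (μ (v 2)) (b (v 0)) (J (b (v 1))) (J (b (v 2)))
  obtain ⟨t13, t23⟩ := type_other_slots J φ hφtype (b (v 0)) (b (v 1)) (b (v 2))
  rw [one_smul] at h12 h13 h23
  rw [hIb, hIb, hIb, h12, h13, h23, hφtype, t13, t23]
  have h0 := hμpos (v 0)
  have h1 := hμpos (v 1)
  have h2 := hμpos (v 2)
  have hpos : 0 < 1 + μ (v 0) * μ (v 1) + μ (v 0) * μ (v 2) + μ (v 1) * μ (v 2) := by positivity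
  convert mul_ne_zero hpos.ne' hv' using 1
  ring
end
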